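/- For an arbitrary prime power q and any divisor t of q−1, the graph G(q², t(q+1)) is K_{3,2t²+1}-free; concretely, any three pairwise distinct vertices of G(q², t(q+1)) have at most 2t² common neighbors. -/

import Mathlib

/-- The scaling relation by the subgroup `H ≤ Fˣ` on nonzero pairs of field elements:
`(a₁,b₁) ∼ (a₂,b₂)` iff there is `h ∈ H` with `a₁ = h·a₂` and `b₁ = h·b₂`. -/
def Grel {F : Type} [Field F] (H : Subgroup Fˣ) (p p' : {p : F × F // p ≠ 0}) : Prop :=
  ∃ h ∈ H, p.1.1 = (h : F) * p'.1.1 ∧ p.1.2 = (h : F) * p'.1.2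

/-- The vertex set of the graph `G(q,t)`: nonzero pairs modulo scaling by `H`. -/
def GVertex (F : Type) [Field F] (H : Subgroup Fˣ) : Type :=
  Quot (Grel H)

/-- Membership of a field element in the subgroup `H ≤ Fˣ`. -/
def memH {F : Type} [Field F] (H : Subgroup Fˣ) (x : F) : Prop :=
  ∃ h ∈ H, (h : F) = x

/-- Adjacency in the graph `G(q,t)`: `⟨a,b⟩` and `⟨x,y⟩` are adjacent iff `a·x + b·y ∈ H`
(this condition is independent of the chosen representatives). -/
def GAdj {F : Type} [Field F] (H : Subgroup Fˣ) (u v : GVertex F H) : Prop :=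
  ∃ p p' : {p : F × F // p ≠ 0},
    u = Quot.mk (Grel H) p ∧ v = Quot.mk (Grel H) p' ∧
      memH H (p.1.1 * p'.1.1 + p.1.2 * p'.1.2)

theorem Grel_equiv {F : Type} [Field F] (H : Subgroup Fˣ) : Equivalence (Grel H) where
  refl p := ⟨1, H.one_mem, by simp, by simp⟩
  symm := by
    rintro p p' ⟨h, hh, h1, h2⟩
    refine ⟨h⁻¹, H.inv_mem hh, ?_, ?_⟩
    · rw [h1]; simp
    · rw [h2]; simp
  trans := by
    rintro p p' p'' ⟨h, hh, h1, h2⟩ ⟨k, hk, k1, k2⟩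
    refine ⟨h * k, H.mul_mem hh hk, ?_, ?_⟩
    · rw [h1, k1]; push_cast; ring
    · rw [h2, k2]; push_cast; ring

theorem GAdj_mk {F : Type} [Field F] (H : Subgroup Fˣ) (p p' : {p : F × F // p ≠ 0})
    (h : GAdj H (Quot.mk _ p) (Quot.mk _ p')) :
    memH H (p.1.1 * p'.1.1 + p.1.2 * p'.1.2) := by
  obtain ⟨r, r', hr, hr', k, hk, hkk⟩ := h
  obtain ⟨a, ha, a1, a2⟩ := (Grel_equiv H).quot_mk_eq_iff _ _ |>.1 hr
  obtain ⟨b, hb, b1, b2⟩ := (Grel_equiv H).quot_mk_eq_iff _ _ |>.1 hr'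
  refine ⟨a * b * k, H.mul_mem (H.mul_mem ha hb) hk, ?_⟩
  rw [a1, a2, b1, b2]; push_cast; rw [hkk]; ring

theorem det_ne {F : Type} [Field F] (H : Subgroup Fˣ) (p p₁ p₂ : {p : F × F // p ≠ 0})
    (h1 : memH H (p.1.1 * p₁.1.1 + p.1.2 * p₁.1.2))
    (h2 : memH H (p.1.1 * p₂.1.1 + p.1.2 * p₂.1.2))
    (hne : (Quot.mk (Grel H) p₁) ≠ Quot.mk (Grel H) p₂) :
    p₁.1.1 * p₂.1.2 - p₂.1.1 * p₁.1.2 ≠ 0 := by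
  intro hd
  apply hne
  obtain ⟨a, ha, ha'⟩ := h1
  obtain ⟨b, hb, hb'⟩ := h2
  apply Quot.sound
  refine ⟨a * b⁻¹, H.mul_mem ha (H.inv_mem hb), ?_, ?_⟩
  · have hb0 : (b : F) ≠ 0 := b.ne_zero
    push_cast
    field_simp
    rw [ha', hb']
    linear_combination p.1.2 * hd
  · have hb0 : (b : F) ≠ 0 := b.ne_zero
    push_cast
    field_simp
    rw [ha', hb']
    linear_combination - p.1.1 * hd

theorem memH_pow {F : Type} [Field F] [Fintype F] (H : Subgroup Fˣ) {n : ℕ}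
    (hH : Nat.card H = n) {x : F} (hx : memH H x) : x ^ n = 1 := by
  obtain ⟨h, hh, rfl⟩ := hx
  have : (⟨h, hh⟩ : H) ^ n = 1 := by rw [← hH]; exact pow_card_eq_one'
  have h2 : h ^ n = 1 := by simpa using congrArg Subtype.val this
  rw [← Units.val_pow_eq_pow_val, h2, Units.val_one]

theorem quad_card {F : Type} [Field F] [DecidableEq F] (S : Finset F) (s m : F)
    (h : ∀ x ∈ S, x * (s - x) = m) : S.card ≤ 2 := by
  by_contra hc
  push Not at hc
  obtain ⟨a, b, c, ha, hb, hc, hab, hac, hbc⟩ := Finset.two_lt_card_iff.1 hc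
  have e1 : (a - b) * (s - a - b) = 0 := by linear_combination h a ha - h b hb
  have e2 : (a - c) * (s - a - c) = 0 := by linear_combination h a ha - h c hc
  have f1 := (mul_eq_zero.1 e1).resolve_left (sub_ne_zero.2 hab)
  have f2 := (mul_eq_zero.1 e2).resolve_left (sub_ne_zero.2 hac)
  exact hbc (by linear_combination f2 - f1)

theorem T_card {q t : ℕ} (hq : IsPrimePow q)
    {F : Type} [Field F] [Fintype F] [DecidableEq F] (hF : Fintype.card F = q ^ 2) (A B : F)
    (ht : 0 < t) :
    (Finset.univ.filter fun X : F => (X ^ (q + 1)) ^ t = A ∧ ((1 - X) ^ (q + 1)) ^ t = B).card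
      ≤ 2 * t ^ 2 := by
  obtain ⟨p, k, hp, hk, rfl⟩ := hq
  have hp' : p.Prime := hp.nat_prime
  haveI : Fact p.Prime := ⟨hp'⟩
  haveI : CharP F p := by
    refine charP_of_card_eq_prime_pow (f := k * 2) ?_
    rw [hF, pow_mul]
  set q := p ^ k with hqdef
  have hfrob : ∀ X : F, (1 - X) ^ q = 1 - X ^ q := by
    intro X
    rw [hqdef, sub_pow_char_pow, one_pow]
  set R : F → Finset F := fun a => (Polynomial.nthRoots t a).toFinset
  have hR : ∀ a, (R a).card ≤ t := fun a =>
    (Multiset.toFinset_card_le _).trans (Polynomial.card_nthRoots t a)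
  have key := Finset.card_le_mul_card_image_of_maps_to
    (s := Finset.univ.filter fun X : F => (X ^ (q + 1)) ^ t = A ∧ ((1 - X) ^ (q + 1)) ^ t = B)
    (t := R A ×ˢ R B) (f := fun X => (X ^ (q + 1), (1 - X) ^ (q + 1)))
    (by
      intro X hX
      simp only [Finset.coe_filter, Finset.mem_filter, Finset.mem_univ, true_and, Set.mem_setOf_eq] at hX
      simp only [Finset.coe_product, Set.mem_prod, Finset.mem_coe, Finset.mem_product, R, Multiset.mem_toFinset,
        Polynomial.mem_nthRoots ht]
      exact hX) 2
    (by
      rintro ⟨a, b⟩ -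
      refine quad_card _ (1 + a - b) a ?_
      intro X hX
      simp only [Finset.mem_filter, Prod.mk.injEq] at hX
      obtain ⟨-, h1, h2⟩ := hX
      rw [pow_succ, hfrob] at h2
      rw [pow_succ] at h1
      linear_combination X * h2 + (1 - X) * h1)
  refine key.trans ?_
  rw [Finset.card_product, sq]
  exact Nat.mul_le_mul_left 2 (Nat.mul_le_mul (hR A) (hR B))

/-- For an arbitrary prime power `q` and `t ∣ q−1`, the graph `G(q², t(q+1))` is
`K_{3,2t²+1}`-free: any three pairwise distinct vertices have at most `2t²` common
neighbors. -/
theorem G_q2_K3_2t2_free {q t : ℕ} (hq : IsPrimePow q) (ht : t ∣ q - 1)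
    {F : Type} [Field F] [Fintype F] (hF : Fintype.card F = q ^ 2)
    (H : Subgroup Fˣ) (hH : Nat.card H = t * (q + 1))
    (v₁ v₂ v₃ : GVertex F H) (h₁₂ : v₁ ≠ v₂) (h₁₃ : v₁ ≠ v₃) (h₂₃ : v₂ ≠ v₃) :
    {w : GVertex F H | GAdj H w v₁ ∧ GAdj H w v₂ ∧ GAdj H w v₃}.ncard ≤ 2 * t ^ 2 := by
  classical
  have ht0 : 0 < t := by
    have : 0 < Nat.card H := Nat.card_pos
    rw [hH] at this
    exact Nat.pos_of_mul_pos_right this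
  obtain ⟨p₁, rfl⟩ := Quot.exists_rep v₁
  obtain ⟨p₂, rfl⟩ := Quot.exists_rep v₂
  obtain ⟨p₃, rfl⟩ := Quot.exists_rep v₃
  set W := {w : GVertex F H | GAdj H w (Quot.mk _ p₁) ∧ GAdj H w (Quot.mk _ p₂) ∧
    GAdj H w (Quot.mk _ p₃)} with hW
  rcases W.eq_empty_or_nonempty with he | ⟨w, hw⟩
  · rw [he]; simp
  obtain ⟨p, rfl⟩ := Quot.exists_rep w
  have m1 := GAdj_mk H _ _ hw.1
  have m2 := GAdj_mk H _ _ hw.2.1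
  have m3 := GAdj_mk H _ _ hw.2.2
  have d12 := det_ne H p p₁ p₂ m1 m2 h₁₂
  have d13 := det_ne H p p₁ p₃ m1 m3 h₁₃
  have d32 := det_ne H p p₃ p₂ m3 m2 h₂₃.symm
  clear m1 m2 m3 hw p
  set d := p₁.1.1 * p₂.1.2 - p₂.1.1 * p₁.1.2 with hd
  set e := p₁.1.1 * p₃.1.2 - p₃.1.1 * p₁.1.2 with he
  set f := p₃.1.1 * p₂.1.2 - p₂.1.1 * p₃.1.2 with hf
  set α := f / d with hα
  set β := e / d with hβ
  have α0 : α ≠ 0 := div_ne_zero d32 d12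
  have β0 : β ≠ 0 := div_ne_zero d13 d12
  set T := Finset.univ.filter fun X : F =>
    (X ^ (q + 1)) ^ t = (α ^ (q + 1)) ^ t ∧ ((1 - X) ^ (q + 1)) ^ t = (β ^ (q + 1)) ^ t with hT
  have hTc : T.card ≤ 2 * t ^ 2 := T_card hq hF _ _ ht0
  have hex : ∀ w ∈ W, ∃ X ∈ T, ∃ p : {p : F × F // p ≠ 0}, ∃ h ∈ H, w = Quot.mk _ p ∧
      p.1.1 * p₁.1.1 + p.1.2 * p₁.1.2 = h * (X / α) ∧
      p.1.1 * p₂.1.1 + p.1.2 * p₂.1.2 = h * ((1 - X) / β) := by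
    intro w hw
    obtain ⟨p, rfl⟩ := Quot.exists_rep w
    obtain ⟨k1, hk1, e1⟩ := GAdj_mk H _ _ hw.1
    obtain ⟨k2, hk2, e2⟩ := GAdj_mk H _ _ hw.2.1
    obtain ⟨k3, hk3, e3⟩ := GAdj_mk H _ _ hw.2.2
    have k30 : (k3 : F) ≠ 0 := k3.ne_zero
    have hlin : α * k1 + β * k2 = k3 := by
      rw [hα, hβ, e1, e2, e3]
      field_simp
      rw [he, hf, hd]
      ring
    have hX2 : 1 - α * (k1 / k3) = β * (k2 / k3) := by
      field_simp
      linear_combination -hlin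
    have hp1 : ((k1 : F) / k3) ^ (t * (q + 1)) = 1 :=
      memH_pow H hH ⟨k1 * k3⁻¹, H.mul_mem hk1 (H.inv_mem hk3), by push_cast; rw [div_eq_mul_inv]⟩
    have hp2 : ((k2 : F) / k3) ^ (t * (q + 1)) = 1 :=
      memH_pow H hH ⟨k2 * k3⁻¹, H.mul_mem hk2 (H.inv_mem hk3), by push_cast; rw [div_eq_mul_inv]⟩
    refine ⟨α * (k1 / k3), ?_, p, k3, hk3, rfl, ?_, ?_⟩
    · rw [hT, Finset.mem_filter]
      refine ⟨Finset.mem_univ _, ?_, ?_⟩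
      · rw [← pow_mul, ← pow_mul, mul_comm (q + 1) t, mul_pow, hp1, mul_one]
      · rw [hX2, ← pow_mul, ← pow_mul, mul_comm (q + 1) t, mul_pow, hp2, mul_one]
    · rw [← e1]; field_simp
    · rw [← e2, hX2]; field_simp
  choose! g hgT hg using hex
  refine le_trans ?_ hTc
  rw [← Set.ncard_coe_finset]
  refine Set.ncard_le_ncard_of_injOn g hgT ?_ T.finite_toSet
  intro w hw w' hw' hgg
  obtain ⟨p, h, hh, rfl, a1, a2⟩ := hg w hw
  obtain ⟨p', h', hh', rfl, b1, b2⟩ := hg w' hw'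
  rw [hgg] at a1 a2
  generalize g (Quot.mk _ p') = X at a1 a2 b1 b2
  have h0 : (h : F) ≠ 0 := h.ne_zero
  have h0' : (h' : F) ≠ 0 := h'.ne_zero
  have c1 : h' * (p.1.1 * p₁.1.1 + p.1.2 * p₁.1.2) = h * (p'.1.1 * p₁.1.1 + p'.1.2 * p₁.1.2) := by
    rw [a1, b1]; ring
  have c2 : h' * (p.1.1 * p₂.1.1 + p.1.2 * p₂.1.2) = h * (p'.1.1 * p₂.1.1 + p'.1.2 * p₂.1.2) := by
    rw [a2, b2]; ring
  apply Quot.sound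
  refine ⟨h * h'⁻¹, H.mul_mem hh (H.inv_mem hh'), ?_, ?_⟩
  · push_cast
    field_simp
    apply mul_right_cancel₀ d12
    rw [hd]
    linear_combination p₂.1.2 * c1 - p₁.1.2 * c2
  · push_cast
    field_simp
    apply mul_right_cancel₀ d12
    rw [hd]
    linear_combination p₁.1.1 * c2 - p₂.1.1 * c1
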